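/- Let p ≥ 1 and let f, g be two positive continuous functions on [0, ∞) such that for x > 0 the integrals I^{α,β,η,μ}_{x,k}[f^p] and I^{α,β,η,μ}_{x,k}[g^p] are finite. If 0 < m ≤ f(τ)/g(τ) ≤ M for all τ ∈ (0, x), then (I^{α,β,η,μ}_{x,k}[f^p])^{2/p} + (I^{α,β,η,μ}_{x,k}[g^p])^{2/p} ≥ (((M+1)(m+1)/M) − 2) · (I^{α,β,η,μ}_{x,k}[f^p])^{1/p} · (I^{α,β,η,μ}_{x,k}[g^p])^{1/p}. -/

import Mathlib

/-!
Write `A = I[f^p]^(1/p)` and `B = I[g^p]^(1/p)`. The kernel is nonnegative on `(0, x)`: since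
`α + β + μ`, `-η` and `α` are positive, every term of the hypergeometric series at a point of
`[0, 1]` is nonnegative (`gauss2F1_nonneg`, `Fker_nonneg`). Hence the pointwise bounds
`m * g ≤ f ≤ M * g` pass to `m * B ≤ A ≤ M * B` (`genKInt_rpow_le`). These say
`(1 + m) * B ≤ A + B` and `(1 + 1 / M) * A ≤ A + B`; multiplying the two gives
`((M + 1) * (m + 1) / M) * A * B ≤ (A + B) ^ 2`, which is the claim.
-/

open MeasureTheory Real Set

/-- The Gauss hypergeometric series `₂F₁(a, b; c; z)`. -/
noncomputable def gauss2F1 (a b c z : ℝ) : ℝ :=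
  ∑' n : ℕ, ((ascPochhammer ℝ n).eval a * (ascPochhammer ℝ n).eval b /
    ((ascPochhammer ℝ n).eval c * (n.factorial : ℝ))) * z ^ n

/-- The kernel `F(x, τ)` of the generalized k-fractional integral operator. -/
noncomputable def Fker (α β η μ k x τ : ℝ) : ℝ :=
  ((k + 1) ^ (μ + β + 1) * x ^ ((k + 1) * (-α - β - 2 * μ)) / Real.Gamma α) *
    τ ^ ((k + 1) * μ) * (x ^ (k + 1) - τ ^ (k + 1)) ^ (α - 1) *
    gauss2F1 (α + β + μ) (-η) α (1 - (τ / x) ^ (k + 1))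

/-- The generalized k-fractional integral operator `I^{α,β,η,μ}_{x,k}[f]`. -/
noncomputable def genKInt (α β η μ k x : ℝ) (f : ℝ → ℝ) : ℝ :=
  ∫ τ in (0:ℝ)..x, Fker α β η μ k x τ * τ ^ k * f τ

lemma gauss2F1_nonneg {a b c z : ℝ} (ha : 0 < a) (hb : 0 < b) (hc : 0 < c) (hz : 0 ≤ z) :
    0 ≤ gauss2F1 a b c z := by
  refine tsum_nonneg fun n => ?_
  have h1 := ascPochhammer_pos n a ha
  have h2 := ascPochhammer_pos n b hb
  have h3 := ascPochhammer_pos n c hc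
  positivity

lemma Fker_nonneg {α β η μ k x τ : ℝ} (hk : 0 ≤ k) (hα : 0 < α) (hαβμ : 0 < α + β + μ)
    (hη : η < 0) (hτ : 0 < τ) (hτx : τ ≤ x) : 0 ≤ Fker α β η μ k x τ := by
  have hx : 0 < x := hτ.trans_le hτx
  have hG := Real.Gamma_pos_of_pos hα
  have hsub : 0 ≤ x ^ (k + 1) - τ ^ (k + 1) :=
    sub_nonneg.2 (Real.rpow_le_rpow hτ.le hτx (by linarith))
  have hz : 0 ≤ 1 - (τ / x) ^ (k + 1) :=
    sub_nonneg.2 (Real.rpow_le_one (by positivity) ((div_le_one hx).2 hτx) (by linarith))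
  have hF := gauss2F1_nonneg hαβμ (neg_pos.2 hη) hα hz
  unfold Fker
  have := Real.rpow_nonneg hsub (α - 1)
  positivity

/-- A pointwise bound `u ≤ c * v` passes to `L^p`-type norms `I[u^p]^(1/p)` when the kernel is
nonnegative. -/
lemma genKInt_rpow_le {α β η μ k x p c : ℝ} {u v : ℝ → ℝ} (hx : 0 < x) (hp : 0 < p) (hc : 0 ≤ c)
    (hF : ∀ τ ∈ Ioo 0 x, 0 ≤ Fker α β η μ k x τ)
    (hu : ∀ τ ∈ Ioo 0 x, 0 ≤ u τ) (hv : ∀ τ ∈ Ioo 0 x, 0 ≤ v τ)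
    (hui : IntervalIntegrable (fun τ => Fker α β η μ k x τ * τ ^ k * (u τ ^ p)) volume 0 x)
    (hvi : IntervalIntegrable (fun τ => Fker α β η μ k x τ * τ ^ k * (v τ ^ p)) volume 0 x)
    (h : ∀ τ ∈ Ioo 0 x, u τ ≤ c * v τ)
    (hu0 : 0 ≤ genKInt α β η μ k x (fun τ => u τ ^ p))
    (hv0 : 0 ≤ genKInt α β η μ k x (fun τ => v τ ^ p)) :
    genKInt α β η μ k x (fun τ => u τ ^ p) ^ (1 / p) ≤
      c * genKInt α β η μ k x (fun τ => v τ ^ p) ^ (1 / p) := by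
  have key : genKInt α β η μ k x (fun τ => u τ ^ p) ≤
      c ^ p * genKInt α β η μ k x (fun τ => v τ ^ p) := by
    unfold genKInt
    rw [← intervalIntegral.integral_const_mul]
    refine intervalIntegral.integral_mono_on_of_le_Ioo hx.le hui (hvi.const_mul _) fun τ hτ => ?_
    have h1 : u τ ^ p ≤ c ^ p * v τ ^ p := by
      rw [← Real.mul_rpow hc (hv τ hτ)]
      exact Real.rpow_le_rpow (hu τ hτ) (h τ hτ) hp.le
    have h2 : 0 ≤ Fker α β η μ k x τ * τ ^ k :=
      mul_nonneg (hF τ hτ) (Real.rpow_nonneg hτ.1.le _)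
    calc _ ≤ Fker α β η μ k x τ * τ ^ k * (c ^ p * v τ ^ p) := mul_le_mul_of_nonneg_left h1 h2
      _ = _ := by ring
  calc _ ≤ (c ^ p * genKInt α β η μ k x (fun τ => v τ ^ p)) ^ (1 / p) :=
        Real.rpow_le_rpow hu0 key (by positivity)
    _ = _ := by
        rw [Real.mul_rpow (Real.rpow_nonneg hc _) hv0, ← Real.rpow_mul hc,
          mul_one_div_cancel hp.ne', Real.rpow_one]

lemma genKInt_rpow_nonneg {α β η μ k x p : ℝ} {u : ℝ → ℝ} (hx : 0 < x)
    (hF : ∀ τ ∈ Ioo 0 x, 0 ≤ Fker α β η μ k x τ) (hu : ∀ τ ∈ Ioo 0 x, 0 ≤ u τ)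
    (hui : IntervalIntegrable (fun τ => Fker α β η μ k x τ * τ ^ k * (u τ ^ p)) volume 0 x) :
    0 ≤ genKInt α β η μ k x (fun τ => u τ ^ p) := by
  have h := intervalIntegral.integral_mono_on_of_le_Ioo (f := fun _ => (0 : ℝ)) hx.le
    intervalIntegrable_const hui fun τ hτ => mul_nonneg
      (mul_nonneg (hF τ hτ) (Real.rpow_nonneg hτ.1.le _)) (Real.rpow_nonneg (hu τ hτ) _)
  simpa [genKInt] using h

theorem reverse_minkowski_second (α β η μ k x : ℝ)
    (hk : 0 ≤ k) (hα : max 0 (-β - μ) < α) (hβ : β < 1) (hμ : -1 < μ)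
    (hη1 : β - 1 < η) (hη2 : η < 0) (hx : 0 < x) (p m M : ℝ) (f g : ℝ → ℝ)
    (hfc : ContinuousOn f (Ici 0)) (hgc : ContinuousOn g (Ici 0))
    (hfpos : ∀ t ∈ Ici (0:ℝ), 0 < f t) (hgpos : ∀ t ∈ Ici (0:ℝ), 0 < g t)
    (hp : 1 ≤ p)
    (hfin_f : IntervalIntegrable (fun τ => Fker α β η μ k x τ * τ ^ k * (f τ ^ p)) volume 0 x)
    (hfin_g : IntervalIntegrable (fun τ => Fker α β η μ k x τ * τ ^ k * (g τ ^ p)) volume 0 x)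
    (hm : 0 < m)
    (hbd : ∀ τ ∈ Ioo (0:ℝ) x, m ≤ f τ / g τ ∧ f τ / g τ ≤ M) :
    ((M + 1) * (m + 1) / M - 2) *
        ((genKInt α β η μ k x (fun τ => f τ ^ p)) ^ (1 / p) * (genKInt α β η μ k x (fun τ => g τ ^ p)) ^ (1 / p)) ≤
      (genKInt α β η μ k x (fun τ => f τ ^ p)) ^ (2 / p) + (genKInt α β η μ k x (fun τ => g τ ^ p)) ^ (2 / p) := by
  have hp0 : 0 < p := by linarith
  have hα0 : 0 < α := (le_max_left _ _).trans_lt hα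
  have hαβμ : 0 < α + β + μ := by
    have := (le_max_right _ _).trans_lt hα
    linarith
  have hF : ∀ τ ∈ Ioo 0 x, 0 ≤ Fker α β η μ k x τ := fun τ hτ =>
    Fker_nonneg hk hα0 hαβμ hη2 hτ.1 hτ.2.le
  have hM : 0 < M := by
    have := hbd (x / 2) ⟨by linarith, by linarith⟩
    linarith
  have hf : ∀ τ ∈ Ioo 0 x, 0 ≤ f τ := fun τ hτ => (hfpos τ hτ.1.le).le
  have hg : ∀ τ ∈ Ioo 0 x, 0 ≤ g τ := fun τ hτ => (hgpos τ hτ.1.le).le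
  have hf0 := genKInt_rpow_nonneg hx hF hf hfin_f
  have hg0 := genKInt_rpow_nonneg hx hF hg hfin_g
  have hAB := genKInt_rpow_le hx hp0 hM.le hF hf hg hfin_f hfin_g
    (fun τ hτ => (div_le_iff₀ (hgpos τ hτ.1.le)).1 (hbd τ hτ).2) hf0 hg0
  have hBA := genKInt_rpow_le hx hp0 (inv_nonneg.2 hm.le) hF hg hf hfin_g hfin_f
    (fun τ hτ => (le_inv_mul_iff₀ hm).2
      ((le_div_iff₀ (hgpos τ hτ.1.le)).1 (hbd τ hτ).1)) hg0 hf0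
  have hsq : ∀ y : ℝ, 0 ≤ y → y ^ (2 / p) = (y ^ (1 / p)) ^ 2 := fun y hy => by
    rw [← Real.rpow_natCast, ← Real.rpow_mul hy]
    congr 1
    push_cast
    ring
  rw [hsq _ hf0, hsq _ hg0]
  have hA0 := Real.rpow_nonneg hf0 (1 / p)
  have hB0 := Real.rpow_nonneg hg0 (1 / p)
  generalize genKInt α β η μ k x (fun τ => f τ ^ p) ^ (1 / p) = A at *
  generalize genKInt α β η μ k x (fun τ => g τ ^ p) ^ (1 / p) = B at *
  have h1 : (m + 1) * B ≤ A + B := by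
    have := (le_inv_mul_iff₀ hm).1 hBA
    linarith
  have h2 : (M + 1) / M * A ≤ A + B := by
    rw [div_mul_eq_mul_div, div_le_iff₀ hM]
    linarith
  have h3 := mul_le_mul h2 h1 (by positivity) (by positivity)
  have h4 : (M + 1) / M * A * ((m + 1) * B) = (M + 1) * (m + 1) / M * (A * B) := by ring
  linarith [h3, h4, sq (A + B), add_sq A B]
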